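/- Let (μ̂, ν̂) solve the perturbed two-point boundary value problem μ̂' = Fμ̂ - GQG*ν̂ + l_μ, -ν̂' = F*ν̂ + H*R^{-1}Hμ̂ - l_ν, μ̂(t0) = -Π0 ν̂(t0), ν̂(T) = ΣT μ̂(T), and set η(t) := ν̂(t) - Σ(t)μ̂(t). Then η satisfies the backward linear ODE -η'(t) = (F*(t) - Σ(t)G(t)Q(t)G*(t)) η(t) + Σ(t) l_μ(t) - l_ν(t) with η(T) = 0, and consequently, by variation of constants, η(t) = ∫_t^T Φ_{F,Σ}*(τ,t) (Σ(τ) l_μ(τ) - l_ν(τ)) dτ for all t ∈ [t0,T]. -/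

import Mathlib

/-!
Write `V = G Q G*`, `W = H* R⁻¹ H` and `A = F - V Σ`. Every function involved is a primitive of an
integrable function, and such functions form an algebra on which the product rule holds
(`IsPrim.mul`, by integration by parts for absolutely continuous functions). Differentiating
`η = ν - Σ μ` and inserting the Riccati equation, the terms in `F`, `W` and `μ` cancel and
`-η' = (F* - Σ V) η + Σ lμ - lν` remains.

For the variation of constants formula one differentiates `τ ↦ Φ(τ,t)* η(τ)`; the terms in `η`
cancel provided `A* = F* - Σ V`, that is, provided `Σ` is symmetric. Since `V` need not be
integrable (`G` is only square integrable and `Q` only integrable), symmetry is not obtained from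
a Gronwall estimate. Instead, `D = Σ - Σ*` solves `-D' = A* D + D A`, so that
`τ ↦ Φ(τ,t)* D(τ) Φ(τ,t)` has derivative zero; it vanishes at `τ = T` and equals `D(t)` at `τ = t`
(`riccati_symm`).
This argument differentiates only products of primitives.
-/

open MeasureTheory Matrix Set Filter

noncomputable section

namespace SDEKernels

/-- Entrywise interval integral of a matrix-valued function. -/
def matInt {ι κ : Type*} (X : ℝ → Matrix ι κ ℝ) (a b : ℝ) : Matrix ι κ ℝ :=
  Matrix.of fun i j => ∫ τ in a..b, X τ i j

/-- Entrywise continuity of a matrix-valued function on a set. -/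
def MatContOn {ι κ : Type*} (X : ℝ → Matrix ι κ ℝ) (s : Set ℝ) : Prop :=
  ∀ i j, ContinuousOn (fun t => X t i j) s

/-- Entrywise interval integrability (matrix-valued `L¹` on `[a,b]`). -/
def MatII {ι κ : Type*} (X : ℝ → Matrix ι κ ℝ) (a b : ℝ) : Prop :=
  ∀ i j, IntervalIntegrable (fun t => X t i j) volume a b

/-- Entrywise square integrability (matrix-valued `L²` on `[a,b]`). -/
def MatL2 {ι κ : Type*} (X : ℝ → Matrix ι κ ℝ) (a b : ℝ) : Prop :=
  ∀ i j, IntervalIntegrable (fun t => X t i j) volume a b ∧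
    IntervalIntegrable (fun t => (X t i j) ^ 2) volume a b

/-- Componentwise square integrability (vector-valued `L²` on `[a,b]`). -/
def VecL2 {ι : Type*} (x : ℝ → ι → ℝ) (a b : ℝ) : Prop :=
  ∀ i, IntervalIntegrable (fun t => x t i) volume a b ∧
    IntervalIntegrable (fun t => (x t i) ^ 2) volume a b

/-- `G(τ) Q(τ) G(τ)*`. -/
def gqg {n d : ℕ} (G : ℝ → Matrix (Fin n) (Fin d) ℝ) (Q : ℝ → Matrix (Fin d) (Fin d) ℝ)
    (τ : ℝ) : Matrix (Fin n) (Fin n) ℝ := G τ * Q τ * (G τ)ᵀ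

/-- `H(τ)* R(τ)⁻¹ H(τ)`. -/
def hrh {n m : ℕ} (H : ℝ → Matrix (Fin m) (Fin n) ℝ) (R : ℝ → Matrix (Fin m) (Fin m) ℝ)
    (τ : ℝ) : Matrix (Fin n) (Fin n) ℝ := (H τ)ᵀ * (R τ)⁻¹ * H τ

/-- `Φ` is the state-transition matrix of `x' = A(s) x` on `[a,b]`, in the
Carathéodory (integral) sense: `Φ(t,t) = I` and `∂ₛ Φ(s,t) = A(s) Φ(s,t)`. -/
def IsTransition {ι : Type*} [Fintype ι] [DecidableEq ι] (a b : ℝ)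
    (A : ℝ → Matrix ι ι ℝ) (Φ : ℝ → ℝ → Matrix ι ι ℝ) : Prop :=
  ∀ t ∈ Icc a b,
    MatContOn (fun s => Φ s t) (Icc a b) ∧
    MatII (fun τ => A τ * Φ τ t) a b ∧
    ∀ s ∈ Icc a b, Φ s t = 1 + matInt (fun τ => A τ * Φ τ t) t s

/-- Carathéodory solution of the backward matrix Riccati equation
`-Σ' = ΣF + F*Σ - Σ G Q G* Σ + H* R⁻¹ H`, `Σ(b) = ST`, on `[a,b]`. -/
def SolvesBackRiccati {n m d : ℕ} (a b : ℝ) (F : ℝ → Matrix (Fin n) (Fin n) ℝ)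
    (G : ℝ → Matrix (Fin n) (Fin d) ℝ) (Q : ℝ → Matrix (Fin d) (Fin d) ℝ)
    (H : ℝ → Matrix (Fin m) (Fin n) ℝ) (R : ℝ → Matrix (Fin m) (Fin m) ℝ)
    (ST : Matrix (Fin n) (Fin n) ℝ) (S : ℝ → Matrix (Fin n) (Fin n) ℝ) : Prop :=
  MatContOn S (Icc a b) ∧
  MatII (fun τ => S τ * F τ + (F τ)ᵀ * S τ - S τ * gqg G Q τ * S τ + hrh H R τ) a b ∧
  S b = ST ∧
  ∀ t ∈ Icc a b,
    S t = ST + matInt (fun τ => S τ * F τ + (F τ)ᵀ * S τ - S τ * gqg G Q τ * S τ + hrh H R τ) t b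

/-- Carathéodory solution of the forward matrix Riccati equation
`Π' = FΠ + ΠF* - Π H* R⁻¹ H Π + G Q G*`, `Π(a) = P0`, on `[a,b]`. -/
def SolvesFwdRiccati {n m d : ℕ} (a b : ℝ) (F : ℝ → Matrix (Fin n) (Fin n) ℝ)
    (G : ℝ → Matrix (Fin n) (Fin d) ℝ) (Q : ℝ → Matrix (Fin d) (Fin d) ℝ)
    (H : ℝ → Matrix (Fin m) (Fin n) ℝ) (R : ℝ → Matrix (Fin m) (Fin m) ℝ)
    (P0 : Matrix (Fin n) (Fin n) ℝ) (P : ℝ → Matrix (Fin n) (Fin n) ℝ) : Prop :=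
  MatContOn P (Icc a b) ∧
  MatII (fun τ => F τ * P τ + P τ * (F τ)ᵀ - P τ * hrh H R τ * P τ + gqg G Q τ) a b ∧
  P a = P0 ∧
  ∀ t ∈ Icc a b,
    P t = P0 + matInt (fun τ => F τ * P τ + P τ * (F τ)ᵀ - P τ * hrh H R τ * P τ + gqg G Q τ) a t

/-- Carathéodory solution of the perturbed two-point boundary value problem
`μ' = Fμ - GQG*ν + lμ`, `-ν' = F*ν + H*R⁻¹Hμ - lν`, `μ(a) = -P0 ν(a)`, `ν(b) = ST μ(b)`. -/
def SolvesTPBVP {n m d : ℕ} (a b : ℝ) (F : ℝ → Matrix (Fin n) (Fin n) ℝ)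
    (G : ℝ → Matrix (Fin n) (Fin d) ℝ) (Q : ℝ → Matrix (Fin d) (Fin d) ℝ)
    (H : ℝ → Matrix (Fin m) (Fin n) ℝ) (R : ℝ → Matrix (Fin m) (Fin m) ℝ)
    (P0 ST : Matrix (Fin n) (Fin n) ℝ) (lμ lν : ℝ → Fin n → ℝ)
    (μ ν : ℝ → Fin n → ℝ) : Prop :=
  ContinuousOn μ (Icc a b) ∧ ContinuousOn ν (Icc a b) ∧
  IntervalIntegrable (fun τ => (F τ).mulVec (μ τ) - (gqg G Q τ).mulVec (ν τ) + lμ τ) volume a b ∧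
  IntervalIntegrable (fun τ => (F τ)ᵀ.mulVec (ν τ) + (hrh H R τ).mulVec (μ τ) - lν τ) volume a b ∧
  (∀ t ∈ Icc a b,
    μ t = μ a + ∫ τ in a..t, ((F τ).mulVec (μ τ) - (gqg G Q τ).mulVec (ν τ) + lμ τ)) ∧
  (∀ t ∈ Icc a b,
    ν t = ν b + ∫ τ in t..b, ((F τ)ᵀ.mulVec (ν τ) + (hrh H R τ).mulVec (μ τ) - lν τ)) ∧
  μ a = -(P0.mulVec (ν a)) ∧
  ν b = ST.mulVec (μ b)

/-- The trajectory kernel `K(s,t|T)`. -/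
def Kker {n d : ℕ} (t0 : ℝ) (G : ℝ → Matrix (Fin n) (Fin d) ℝ)
    (Q : ℝ → Matrix (Fin d) (Fin d) ℝ) (PhiFS : ℝ → ℝ → Matrix (Fin n) (Fin n) ℝ)
    (S : ℝ → Matrix (Fin n) (Fin n) ℝ) (P0h : Matrix (Fin n) (Fin n) ℝ)
    (s t : ℝ) : Matrix (Fin n) (Fin n) ℝ :=
  PhiFS s t0 * P0h * (1 + P0h * S t0 * P0h)⁻¹ * P0h * (PhiFS t t0)ᵀ +
    matInt (fun τ => PhiFS s τ * gqg G Q τ * (PhiFS t τ)ᵀ) t0 (min s t)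

/-- The information kernel `Λ(s,t|T)`. -/
def Lker {n m : ℕ} (T : ℝ) (H : ℝ → Matrix (Fin m) (Fin n) ℝ)
    (R : ℝ → Matrix (Fin m) (Fin m) ℝ) (PhiFP : ℝ → ℝ → Matrix (Fin n) (Fin n) ℝ)
    (P : ℝ → Matrix (Fin n) (Fin n) ℝ) (STh : Matrix (Fin n) (Fin n) ℝ)
    (s t : ℝ) : Matrix (Fin n) (Fin n) ℝ :=
  (PhiFP T s)ᵀ * STh * (1 + STh * P T * STh)⁻¹ * STh * PhiFP T t +
    matInt (fun τ => (PhiFP τ s)ᵀ * hrh H R τ * PhiFP τ t) (max s t) T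


/-- Carathéodory solution of the forward linear ODE `x' = A(τ) x` (vector-valued). -/
def SolvesLinFwd {n : ℕ} (a b : ℝ) (A : ℝ → Matrix (Fin n) (Fin n) ℝ)
    (x : ℝ → Fin n → ℝ) : Prop :=
  ContinuousOn x (Icc a b) ∧
  IntervalIntegrable (fun τ => (A τ).mulVec (x τ)) volume a b ∧
  ∀ t ∈ Icc a b, x t = x a + ∫ τ in a..t, (A τ).mulVec (x τ)

/-- Carathéodory solution of the backward linear ODE `-χ' = F(σ)* χ` on `[a,c]`
with terminal value `χ(c) = z`. -/
def SolvesChi {n : ℕ} (a c : ℝ) (F : ℝ → Matrix (Fin n) (Fin n) ℝ) (z : Fin n → ℝ)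
    (χ : ℝ → Fin n → ℝ) : Prop :=
  ContinuousOn χ (Icc a c) ∧
  IntervalIntegrable (fun σ => (F σ)ᵀ.mulVec (χ σ)) volume a c ∧
  χ c = z ∧
  ∀ τ ∈ Icc a c, χ τ = z + ∫ σ in τ..c, (F σ)ᵀ.mulVec (χ σ)

/-- Carathéodory solution of the impulse-response two-point boundary value problem at `t`:
`x' = Fx - GQG*q + GQG*χ·1_{τ<t}`, `-q' = F*q + H*R⁻¹Hx`,
`x(a) = -P0 q(a) + P0 χ(a)`, `q(b) = ST x(b)`. -/
def SolvesImpulseSystem {n m d : ℕ} (a b t : ℝ) (F : ℝ → Matrix (Fin n) (Fin n) ℝ)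
    (G : ℝ → Matrix (Fin n) (Fin d) ℝ) (Q : ℝ → Matrix (Fin d) (Fin d) ℝ)
    (H : ℝ → Matrix (Fin m) (Fin n) ℝ) (R : ℝ → Matrix (Fin m) (Fin m) ℝ)
    (P0 ST : Matrix (Fin n) (Fin n) ℝ) (χ x q : ℝ → Fin n → ℝ) : Prop :=
  ContinuousOn x (Icc a b) ∧ ContinuousOn q (Icc a b) ∧
  IntervalIntegrable (fun τ => (F τ).mulVec (x τ) - (gqg G Q τ).mulVec (q τ) +
    (if τ < t then (gqg G Q τ).mulVec (χ τ) else 0)) volume a b ∧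
  IntervalIntegrable (fun τ => (F τ)ᵀ.mulVec (q τ) + (hrh H R τ).mulVec (x τ)) volume a b ∧
  (∀ s ∈ Icc a b, x s = x a + ∫ τ in a..s, ((F τ).mulVec (x τ) - (gqg G Q τ).mulVec (q τ) +
    (if τ < t then (gqg G Q τ).mulVec (χ τ) else 0))) ∧
  (∀ s ∈ Icc a b, q s = q b + ∫ τ in s..b, ((F τ)ᵀ.mulVec (q τ) + (hrh H R τ).mulVec (x τ))) ∧
  x a = -(P0.mulVec (q a)) + P0.mulVec (χ a) ∧
  q b = ST.mulVec (x b)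

/-- Right-hand side of the adjoint equation `-λ' = F*λ + H*R⁻¹H γ`. -/
def hamRHS {n m : ℕ} (F : ℝ → Matrix (Fin n) (Fin n) ℝ)
    (H : ℝ → Matrix (Fin m) (Fin n) ℝ) (R : ℝ → Matrix (Fin m) (Fin m) ℝ)
    (gam lam : ℝ → Fin n → ℝ) (τ : ℝ) : Fin n → ℝ :=
  (F τ)ᵀ.mulVec (lam τ) + (hrh H R τ).mulVec (gam τ)

/-- Carathéodory solution `(γ, λ)` of the Hamiltonian system with a jump of size `lamb` at `s`
(and terminal condition appropriate to `ΣT = 0`):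
`γ' = Fγ - GQG*λ`, `-λ' = F*λ + H*R⁻¹Hγ` on `[t0,s)` and `(s,T]`, `γ(t0) = -Π0 λ(t0)`,
`λ(T) = 0` if `s < T` (`λ(T) = lamb` if `s = T`), and `λ(s) - λ(s⁺) = lamb` if `s < T`. -/
def SolvesHamJump {n m d : ℕ} (t0 T s : ℝ) (F : ℝ → Matrix (Fin n) (Fin n) ℝ)
    (G : ℝ → Matrix (Fin n) (Fin d) ℝ) (Q : ℝ → Matrix (Fin d) (Fin d) ℝ)
    (H : ℝ → Matrix (Fin m) (Fin n) ℝ) (R : ℝ → Matrix (Fin m) (Fin m) ℝ)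
    (P0 : Matrix (Fin n) (Fin n) ℝ) (lamb : Fin n → ℝ) (gam lam : ℝ → Fin n → ℝ) : Prop :=
  ContinuousOn gam (Icc t0 T) ∧
  IntervalIntegrable (fun τ => (F τ).mulVec (gam τ) - (gqg G Q τ).mulVec (lam τ)) volume t0 T ∧
  IntervalIntegrable (hamRHS F H R gam lam) volume t0 T ∧
  gam t0 = -(P0.mulVec (lam t0)) ∧
  (∀ t ∈ Icc t0 T,
    gam t = gam t0 + ∫ τ in t0..t, ((F τ).mulVec (gam τ) - (gqg G Q τ).mulVec (lam τ))) ∧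
  ContinuousOn lam (Icc t0 s) ∧
  (∀ t ∈ Icc t0 s, lam t = lam s + ∫ τ in t..s, hamRHS F H R gam lam τ) ∧
  (s < T →
    ContinuousOn lam (Ioc s T) ∧ lam T = 0 ∧
    (∀ t ∈ Ioc s T, lam t = ∫ τ in t..T, hamRHS F H R gam lam τ) ∧
    Tendsto lam (nhdsWithin s (Ioi s)) (nhds (lam s - lamb))) ∧
  (s = T → lam T = lamb)

/-- Carathéodory solution of the filter equation
`r' = (F - Π H* R⁻¹ H) r + Π H* R⁻¹ g`, `r(t0) = 0`. -/
def SolvesRODE {n m : ℕ} (a b : ℝ) (F : ℝ → Matrix (Fin n) (Fin n) ℝ)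
    (H : ℝ → Matrix (Fin m) (Fin n) ℝ) (R : ℝ → Matrix (Fin m) (Fin m) ℝ)
    (P : ℝ → Matrix (Fin n) (Fin n) ℝ) (g : ℝ → Fin m → ℝ) (rr : ℝ → Fin n → ℝ) : Prop :=
  ContinuousOn rr (Icc a b) ∧
  IntervalIntegrable (fun τ => (F τ - P τ * hrh H R τ).mulVec (rr τ) +
    (P τ * (H τ)ᵀ * (R τ)⁻¹).mulVec (g τ)) volume a b ∧
  rr a = 0 ∧
  ∀ t ∈ Icc a b, rr t = ∫ τ in a..t, ((F τ - P τ * hrh H R τ).mulVec (rr τ) +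
    (P τ * (H τ)ᵀ * (R τ)⁻¹).mulVec (g τ))

/-- Carathéodory solution of the controlled ODE `x' = F x + G Q^{1/2} u`, `x(t0) = Π0^{1/2} ξ`. -/
def SolvesControlODE {n d : ℕ} (a b : ℝ) (F : ℝ → Matrix (Fin n) (Fin n) ℝ)
    (G : ℝ → Matrix (Fin n) (Fin d) ℝ) (Qh : ℝ → Matrix (Fin d) (Fin d) ℝ)
    (P0h : Matrix (Fin n) (Fin n) ℝ) (ξ : Fin n → ℝ) (u : ℝ → Fin d → ℝ)
    (x : ℝ → Fin n → ℝ) : Prop :=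
  ContinuousOn x (Icc a b) ∧
  IntervalIntegrable (fun σ => (F σ).mulVec (x σ) + (G σ * Qh σ).mulVec (u σ)) volume a b ∧
  x a = P0h.mulVec ξ ∧
  ∀ τ ∈ Icc a b, x τ = x a + ∫ σ in a..τ, ((F σ).mulVec (x σ) + (G σ * Qh σ).mulVec (u σ))

/-- The least-squares objective of the deterministic smoothing problem. -/
def Jfun {n m d : ℕ} (a b : ℝ) (H : ℝ → Matrix (Fin m) (Fin n) ℝ)
    (R : ℝ → Matrix (Fin m) (Fin m) ℝ) (ST : Matrix (Fin n) (Fin n) ℝ)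
    (ytil : ℝ → Fin m → ℝ) (ξ : Fin n → ℝ) (u : ℝ → Fin d → ℝ) (x : ℝ → Fin n → ℝ) : ℝ :=
  dotProduct ξ ξ + dotProduct (ST.mulVec (x b)) (x b)
    + (∫ τ in a..b, dotProduct (u τ) (u τ))
    + (∫ τ in a..b, dotProduct ((hrh H R τ).mulVec (x τ)) (x τ))
    - 2 * ∫ τ in a..b, dotProduct (ytil τ) (((R τ)⁻¹ * H τ).mulVec (x τ))
/-- The Hamiltonian matrix `[[F, -GQG*], [-H*R⁻¹H, -F*]]`. -/
def hamMat {n m d : ℕ} (F : ℝ → Matrix (Fin n) (Fin n) ℝ)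
    (G : ℝ → Matrix (Fin n) (Fin d) ℝ) (Q : ℝ → Matrix (Fin d) (Fin d) ℝ)
    (H : ℝ → Matrix (Fin m) (Fin n) ℝ) (R : ℝ → Matrix (Fin m) (Fin m) ℝ) (t : ℝ) :
    Matrix (Fin n ⊕ Fin n) (Fin n ⊕ Fin n) ℝ :=
  Matrix.fromBlocks (F t) (-(gqg G Q t)) (-(hrh H R t)) (-(F t)ᵀ)

/-- `Φ̄(T,t) = [[I,0],[-ΣT,I]] · Φ_𝐇(T,t)`. -/
def phiBar {n : ℕ} (ST : Matrix (Fin n) (Fin n) ℝ)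
    (PhiH : ℝ → ℝ → Matrix (Fin n ⊕ Fin n) (Fin n ⊕ Fin n) ℝ) (T t : ℝ) :
    Matrix (Fin n ⊕ Fin n) (Fin n ⊕ Fin n) ℝ :=
  Matrix.fromBlocks 1 0 (-ST) 1 * PhiH T t

/-! ### Primitives of integrable functions -/

/-- `f` is a primitive on `[a,b]` of the integrable function `f'`: the Carathéodory form of
"`f` is absolutely continuous with derivative `f'` almost everywhere". -/
def IsPrim (a b : ℝ) (f f' : ℝ → ℝ) : Prop :=
  IntervalIntegrable f' volume a b ∧
    ∀ s ∈ Icc a b, ∀ t ∈ Icc a b, f t - f s = ∫ τ in s..t, f' τ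

lemma intervalIntegrable_sub {E : Type*} [NormedAddCommGroup E] {a b s t : ℝ} {g : ℝ → E}
    (h : IntervalIntegrable g volume a b)
    (hs : s ∈ Icc a b) (ht : t ∈ Icc a b) : IntervalIntegrable g volume s t := by
  refine h.mono_set ?_
  rw [uIcc_of_le (hs.1.trans hs.2)]
  exact uIcc_subset_Icc hs ht

lemma IsPrim.of_base {a b c : ℝ} {f f' : ℝ → ℝ} (h : IntervalIntegrable f' volume a b)
    (hc : c ∈ Icc a b) (hf : ∀ t ∈ Icc a b, f t = f c + ∫ τ in c..t, f' τ) :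
    IsPrim a b f f' := by
  refine ⟨h, fun s hs t ht => ?_⟩
  rw [hf s hs, hf t ht, add_sub_add_left_eq_sub]
  exact intervalIntegral.integral_interval_sub_left (intervalIntegrable_sub h hc ht)
    (intervalIntegrable_sub h hc hs)

lemma IsPrim.congr {a b : ℝ} {f f' g g' : ℝ → ℝ} (hab : a ≤ b) (h : IsPrim a b f f')
    (hf : ∀ t ∈ Icc a b, f t = g t) (hf' : ∀ t ∈ Icc a b, f' t = g' t) : IsPrim a b g g' := by
  refine ⟨h.1.congr fun t ht => hf' t ?_, fun s hs t ht => ?_⟩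
  · rw [uIoc_of_le hab] at ht
    exact Ioc_subset_Icc_self ht
  rw [← hf s hs, ← hf t ht, h.2 s hs t ht]
  exact intervalIntegral.integral_congr fun τ hτ => hf' τ (uIcc_subset_Icc hs ht hτ)

lemma IsPrim.add {a b : ℝ} {f f' g g' : ℝ → ℝ} (hf : IsPrim a b f f') (hg : IsPrim a b g g') :
    IsPrim a b (fun t => f t + g t) (fun t => f' t + g' t) := by
  refine ⟨hf.1.add hg.1, fun s hs t ht => ?_⟩
  rw [intervalIntegral.integral_add (intervalIntegrable_sub hf.1 hs ht)
    (intervalIntegrable_sub hg.1 hs ht), ← hf.2 s hs t ht, ← hg.2 s hs t ht]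
  ring

lemma IsPrim.neg {a b : ℝ} {f f' : ℝ → ℝ} (hf : IsPrim a b f f') :
    IsPrim a b (fun t => -f t) (fun t => -f' t) := by
  refine ⟨hf.1.neg, fun s hs t ht => ?_⟩
  rw [intervalIntegral.integral_neg, ← hf.2 s hs t ht]
  ring

lemma IsPrim.sub {a b : ℝ} {f f' g g' : ℝ → ℝ} (hf : IsPrim a b f f') (hg : IsPrim a b g g') :
    IsPrim a b (fun t => f t - g t) (fun t => f' t - g' t) := by
  simpa only [sub_eq_add_neg] using hf.add hg.neg

lemma IsPrim.sum {ι : Type*} (s : Finset ι) {a b : ℝ} {f f' : ι → ℝ → ℝ}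
    (h : ∀ i ∈ s, IsPrim a b (f i) (f' i)) :
    IsPrim a b (fun t => ∑ i ∈ s, f i t) (fun t => ∑ i ∈ s, f' i t) := by
  classical
  induction s using Finset.induction_on with
  | empty => exact ⟨by simp, by simp⟩
  | insert i s hi ih =>
    simp only [Finset.sum_insert hi]
    exact (h i (by simp)).add (ih fun j hj => h j (by simp [hj]))

/-- A primitive agrees on `[s,t]` with a globally defined integral, which is absolutely continuous
there and has the expected derivative almost everywhere. -/
lemma IsPrim.exists_ac {a b s t : ℝ} {f f' : ℝ → ℝ} (h : IsPrim a b f f') (hs : s ∈ Icc a b)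
    (ht : t ∈ Icc a b) : ∃ u : ℝ → ℝ, AbsolutelyContinuousOnInterval u s t ∧
      (∀ x ∈ uIcc s t, u x = f x) ∧ ∀ᵐ x, x ∈ uIcc s t → deriv u x = f' x := by
  have hi := intervalIntegrable_sub h.1 hs ht
  refine ⟨fun x => f s + ∫ τ in s..x, f' τ, ?_, fun x hx => ?_, ?_⟩
  · exact ((LipschitzWith.const (f s)).lipschitzOnWith.absolutelyContinuousOnInterval).add
      (hi.absolutelyContinuousOnInterval_intervalIntegral left_mem_uIcc)
  · change f s + ∫ τ in s..x, f' τ = f x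
    rw [← h.2 s hs x (uIcc_subset_Icc hs ht hx)]
    ring
  · filter_upwards [hi.ae_hasDerivAt_integral] with x hx hxs
    exact ((hx hxs s left_mem_uIcc).const_add (f s)).deriv

lemma IsPrim.continuousOn {a b : ℝ} {f f' : ℝ → ℝ} (h : IsPrim a b f f') :
    ContinuousOn f (Icc a b) := by
  rcases le_or_gt a b with hab | hab
  · obtain ⟨u, hu, huf, -⟩ := h.exists_ac (left_mem_Icc.2 hab) (right_mem_Icc.2 hab)
    rw [← uIcc_of_le hab]
    exact hu.continuousOn.congr fun x hx => (huf x hx).symm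
  · simp [Icc_eq_empty_of_lt hab]

/-- Product rule. -/
lemma IsPrim.mul {a b : ℝ} {f f' g g' : ℝ → ℝ} (hab : a ≤ b) (hf : IsPrim a b f f')
    (hg : IsPrim a b g g') :
    IsPrim a b (fun t => f t * g t) (fun t => f' t * g t + f t * g' t) := by
  refine ⟨(hf.1.mul_continuousOn ?_).add (hg.1.continuousOn_mul ?_), fun s hs t ht => ?_⟩
  · rw [uIcc_of_le hab]; exact hg.continuousOn
  · rw [uIcc_of_le hab]; exact hf.continuousOn
  obtain ⟨u, hu, huf, hu'⟩ := hf.exists_ac hs ht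
  obtain ⟨v, hv, hvg, hv'⟩ := hg.exists_ac hs ht
  change f t * g t - f s * g s = ∫ τ in s..t, (f' τ * g τ + f τ * g' τ)
  rw [← huf s left_mem_uIcc, ← huf t right_mem_uIcc, ← hvg s left_mem_uIcc,
    ← hvg t right_mem_uIcc, ← hu.integral_deriv_mul_eq_sub hv]
  refine intervalIntegral.integral_congr_ae ?_
  filter_upwards [hu', hv'] with x hx hx' hxs
  have hxs := uIoc_subset_uIcc hxs
  rw [hx hxs, hx' hxs, huf x hxs, hvg x hxs]

/-- Entrywise `IsPrim` for matrix-valued functions. -/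
def MatPrim {ι κ : Type*} (a b : ℝ) (X X' : ℝ → Matrix ι κ ℝ) : Prop :=
  ∀ i j, IsPrim a b (fun t => X t i j) (fun t => X' t i j)

/-- Componentwise `IsPrim` for vector-valued functions. -/
def VecPrim {ι : Type*} (a b : ℝ) (x x' : ℝ → ι → ℝ) : Prop :=
  ∀ i, IsPrim a b (fun t => x t i) (fun t => x' t i)

lemma MatPrim.mul {ι κ l : Type*} [Fintype κ] {a b : ℝ} (hab : a ≤ b)
    {X X' : ℝ → Matrix ι κ ℝ} {Y Y' : ℝ → Matrix κ l ℝ}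
    (hX : MatPrim a b X X') (hY : MatPrim a b Y Y') :
    MatPrim a b (fun t => X t * Y t) (fun t => X' t * Y t + X t * Y' t) := fun i j => by
  simp only [Matrix.add_apply, Matrix.mul_apply, ← Finset.sum_add_distrib]
  exact IsPrim.sum _ fun k _ => (hX i k).mul hab (hY k j)

lemma MatPrim.mulVec {ι κ : Type*} [Fintype κ] {a b : ℝ} (hab : a ≤ b)
    {X X' : ℝ → Matrix ι κ ℝ} {y y' : ℝ → κ → ℝ}
    (hX : MatPrim a b X X') (hy : VecPrim a b y y') :
    VecPrim a b (fun t => (X t).mulVec (y t))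
      (fun t => (X' t).mulVec (y t) + (X t).mulVec (y' t)) := fun i => by
  simp only [Pi.add_apply, Matrix.mulVec, dotProduct, ← Finset.sum_add_distrib]
  exact IsPrim.sum _ fun k _ => (hX i k).mul hab (hy k)

lemma VecPrim.intervalIntegrable {ι : Type*} [Fintype ι] {a b : ℝ} {x x' : ℝ → ι → ℝ}
    (h : VecPrim a b x x') : IntervalIntegrable x' volume a b :=
  ⟨Integrable.of_eval fun i => (h i).1.1, Integrable.of_eval fun i => (h i).1.2⟩

lemma intervalIntegral_apply {ι : Type*} [Fintype ι] {s t : ℝ} {g : ℝ → ι → ℝ}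
    (h : IntervalIntegrable g volume s t) (i : ι) :
    (∫ τ in s..t, g τ) i = ∫ τ in s..t, g τ i :=
  ((ContinuousLinearMap.proj (R := ℝ) (φ := fun _ : ι => ℝ) i).intervalIntegral_comp_comm h).symm

lemma VecPrim.sub_eq_integral {ι : Type*} [Fintype ι] {a b s t : ℝ} {x x' : ℝ → ι → ℝ}
    (h : VecPrim a b x x') (hs : s ∈ Icc a b) (ht : t ∈ Icc a b) :
    x t - x s = ∫ τ in s..t, x' τ := by
  ext i
  rw [intervalIntegral_apply (intervalIntegrable_sub h.intervalIntegrable hs ht)]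
  exact (h i).2 s hs t ht

lemma VecPrim.of_base {ι : Type*} [Fintype ι] {a b c : ℝ} {x x' : ℝ → ι → ℝ}
    (h : IntervalIntegrable x' volume a b)
    (hc : c ∈ Icc a b) (hx : ∀ t ∈ Icc a b, x t = x c + ∫ τ in c..t, x' τ) :
    VecPrim a b x x' := fun i => by
  refine IsPrim.of_base (c := c) ⟨h.1.eval i, h.2.eval i⟩ hc fun t ht => ?_
  rw [← intervalIntegral_apply (intervalIntegrable_sub h hc ht), ← Pi.add_apply, ← hx t ht]

/-! ### Symmetry of the Riccati solution -/

lemma gqg_transpose {n d : ℕ} {G : ℝ → Matrix (Fin n) (Fin d) ℝ}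
    {Q : ℝ → Matrix (Fin d) (Fin d) ℝ} {t : ℝ} (hQ : (Q t).PosSemidef) :
    (gqg G Q t)ᵀ = gqg G Q t := by
  have h : (Q t)ᵀ = Q t := by simpa using hQ.isHermitian.eq
  simp [gqg, Matrix.transpose_mul, h, Matrix.mul_assoc]

lemma hrh_transpose {n m : ℕ} {H : ℝ → Matrix (Fin m) (Fin n) ℝ}
    {R : ℝ → Matrix (Fin m) (Fin m) ℝ} {t r : ℝ}
    (hR : (R t - r • (1 : Matrix (Fin m) (Fin m) ℝ)).PosSemidef) :
    (hrh H R t)ᵀ = hrh H R t := by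
  have h : (R t)ᵀ = R t := by simpa using hR.isHermitian.eq
  simp [hrh, Matrix.transpose_mul, Matrix.transpose_nonsing_inv, h, Matrix.mul_assoc]

lemma SolvesBackRiccati.matPrim {n m d : ℕ} {a b : ℝ} (hab : a ≤ b)
    {F : ℝ → Matrix (Fin n) (Fin n) ℝ}
    {G : ℝ → Matrix (Fin n) (Fin d) ℝ} {Q : ℝ → Matrix (Fin d) (Fin d) ℝ}
    {H : ℝ → Matrix (Fin m) (Fin n) ℝ} {R : ℝ → Matrix (Fin m) (Fin m) ℝ}
    {ST : Matrix (Fin n) (Fin n) ℝ} {S : ℝ → Matrix (Fin n) (Fin n) ℝ}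
    (h : SolvesBackRiccati a b F G Q H R ST S) :
    MatPrim a b S
      (fun τ => -(S τ * F τ + (F τ)ᵀ * S τ - S τ * gqg G Q τ * S τ + hrh H R τ)) := by
  intro i j
  refine IsPrim.of_base (c := b) (h.2.1 i j).neg (right_mem_Icc.2 hab) fun t ht => ?_
  have := congrFun (congrFun (h.2.2.2 t ht) i) j
  rw [this, h.2.2.1, intervalIntegral.integral_symm t b, ← intervalIntegral.integral_neg]
  simp only [Matrix.neg_apply, neg_neg]
  rfl

lemma IsTransition.matPrim {n : ℕ} {a b t : ℝ} {A : ℝ → Matrix (Fin n) (Fin n) ℝ}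
    {Φ : ℝ → ℝ → Matrix (Fin n) (Fin n) ℝ} (h : IsTransition a b A Φ) (ht : t ∈ Icc a b) :
    MatPrim a b (fun τ => Φ τ t) (fun τ => A τ * Φ τ t) := by
  obtain ⟨-, h2, h3⟩ := h t ht
  intro i j
  refine IsPrim.of_base (c := t) (h2 i j) ht fun s hs => ?_
  change Φ s t i j = Φ t t i j + ∫ τ in t..s, (A τ * Φ τ t) i j
  rw [h3 s hs, h3 t ht]
  simp [matInt]

lemma IsTransition.self {n : ℕ} {a b t : ℝ} {A : ℝ → Matrix (Fin n) (Fin n) ℝ}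
    {Φ : ℝ → ℝ → Matrix (Fin n) (Fin n) ℝ} (h : IsTransition a b A Φ) (ht : t ∈ Icc a b) :
    Φ t t = 1 := by
  rw [(h t ht).2.2 t ht]
  ext i j
  simp [matInt]

/-- The Riccati solution is symmetric: with `D = Σ - Σ*`, the function
`τ ↦ Φ(τ,t)* D(τ) Φ(τ,t)` is constant and vanishes at the right end point. -/
lemma riccati_symm {n m d : ℕ} {a b r : ℝ} (hab : a ≤ b)
    {F : ℝ → Matrix (Fin n) (Fin n) ℝ}
    {G : ℝ → Matrix (Fin n) (Fin d) ℝ} {Q : ℝ → Matrix (Fin d) (Fin d) ℝ}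
    {H : ℝ → Matrix (Fin m) (Fin n) ℝ} {R : ℝ → Matrix (Fin m) (Fin m) ℝ}
    (hQ : ∀ t ∈ Icc a b, (Q t).PosSemidef)
    (hR : ∀ t ∈ Icc a b, (R t - r • (1 : Matrix (Fin m) (Fin m) ℝ)).PosSemidef)
    {ST : Matrix (Fin n) (Fin n) ℝ} (hST : ST.PosSemidef) {S : ℝ → Matrix (Fin n) (Fin n) ℝ}
    (hS : SolvesBackRiccati a b F G Q H R ST S) {Φ : ℝ → ℝ → Matrix (Fin n) (Fin n) ℝ}
    (hΦ : IsTransition a b (fun τ => F τ - gqg G Q τ * S τ) Φ) {t : ℝ} (ht : t ∈ Icc a b) :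
    (S t)ᵀ = S t := by
  have hSp := hS.matPrim hab
  have hΦp := hΦ.matPrim ht
  have hΦt : MatPrim a b (fun τ => (Φ τ t)ᵀ)
      (fun τ => ((F τ - gqg G Q τ * S τ) * Φ τ t)ᵀ) := fun i j => hΦp j i
  have hD : MatPrim a b (fun τ => S τ - (S τ)ᵀ) (fun τ =>
      -(S τ * F τ + (F τ)ᵀ * S τ - S τ * gqg G Q τ * S τ + hrh H R τ) -
      (-(S τ * F τ + (F τ)ᵀ * S τ - S τ * gqg G Q τ * S τ + hrh H R τ))ᵀ) := fun i j => (hSp i j).sub (hSp j i)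
  have hP : MatPrim a b (fun τ => (Φ τ t)ᵀ * (S τ - (S τ)ᵀ) * Φ τ t) (fun _ => 0) := by
    intro i j
    refine ((hΦt.mul hab hD).mul hab hΦp i j).congr hab (fun _ _ => rfl) fun τ hτ => ?_
    refine congrFun (congrFun (?_ : (_ * (S τ - (S τ)ᵀ) + _ * (-_ - (-_)ᵀ)) * _ + _ =
      (0 : Matrix (Fin n) (Fin n) ℝ)) i) j
    have hV := gqg_transpose (G := G) (hQ τ hτ)
    have hW := hrh_transpose (H := H) (hR τ hτ)
    simp only [Matrix.transpose_mul, Matrix.transpose_sub, Matrix.transpose_add,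
      Matrix.transpose_neg, Matrix.transpose_transpose, hV, hW]
    noncomm_ring
  have hc : (Φ t t)ᵀ * (S t - (S t)ᵀ) * Φ t t = 0 := by
    ext i j
    have h := (hP i j).2 t ht b (right_mem_Icc.2 hab)
    have hb : S b - (S b)ᵀ = 0 := by
      rw [hS.2.2.1, sub_eq_zero]
      simpa using hST.isHermitian.eq.symm
    simpa [hb] using h
  rw [hΦ.self ht] at hc
  simpa [sub_eq_zero, eq_comm] using hc

/-! ### The equation for `η` -/

/-- `η := ν̂ - Σ μ̂` solves the backward linear ODE
`-η' = (F* - ΣGQG*)η + Σ lμ - lν`, `η(T) = 0`, and is given by variation of constants. -/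
theorem stmt5 {n m d : ℕ} (t0 T r : ℝ) (ht : t0 < T) (hr : 0 < r)
    (F : ℝ → Matrix (Fin n) (Fin n) ℝ) (G : ℝ → Matrix (Fin n) (Fin d) ℝ)
    (Q : ℝ → Matrix (Fin d) (Fin d) ℝ) (H : ℝ → Matrix (Fin m) (Fin n) ℝ)
    (R : ℝ → Matrix (Fin m) (Fin m) ℝ)
    (hF : MatII F t0 T) (hG : MatL2 G t0 T) (hQ : MatII Q t0 T)
    (hQpsd : ∀ t ∈ Icc t0 T, (Q t).PosSemidef) (hH : MatL2 H t0 T) (hR : MatL2 R t0 T)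
    (hRbd : ∀ t ∈ Icc t0 T, (R t - r • (1 : Matrix (Fin m) (Fin m) ℝ)).PosSemidef)
    (P0 ST : Matrix (Fin n) (Fin n) ℝ) (hP0 : P0.PosSemidef) (hST : ST.PosSemidef)
    (Sg : ℝ → Matrix (Fin n) (Fin n) ℝ) (hSg : SolvesBackRiccati t0 T F G Q H R ST Sg)
    (PhiFS : ℝ → ℝ → Matrix (Fin n) (Fin n) ℝ)
    (hPhiFS : IsTransition t0 T (fun τ => F τ - gqg G Q τ * Sg τ) PhiFS)
    (lμ lν : ℝ → Fin n → ℝ) (hlμ : VecL2 lμ t0 T) (hlν : VecL2 lν t0 T)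
    (μ ν : ℝ → Fin n → ℝ) (hμν : SolvesTPBVP t0 T F G Q H R P0 ST lμ lν μ ν) :
    ν T - (Sg T).mulVec (μ T) = 0 ∧
    IntervalIntegrable (fun τ => ((F τ)ᵀ - Sg τ * gqg G Q τ).mulVec (ν τ - (Sg τ).mulVec (μ τ)) +
      (Sg τ).mulVec (lμ τ) - lν τ) volume t0 T ∧
    (∀ t ∈ Icc t0 T,
      ν t - (Sg t).mulVec (μ t) =
        ∫ τ in t..T, (((F τ)ᵀ - Sg τ * gqg G Q τ).mulVec (ν τ - (Sg τ).mulVec (μ τ)) +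
          (Sg τ).mulVec (lμ τ) - lν τ)) ∧
    ∀ t ∈ Icc t0 T,
      ν t - (Sg t).mulVec (μ t) =
        ∫ τ in t..T, (PhiFS τ t)ᵀ.mulVec ((Sg τ).mulVec (lμ τ) - lν τ) := by
  have hab := ht.le
  obtain ⟨-, -, hμi, hνi, hμ, hν, -, hνT⟩ := hμν
  have hSp := hSg.matPrim hab
  have hμp := VecPrim.of_base hμi (left_mem_Icc.2 hab) hμ
  have hνp : VecPrim t0 T ν _ := VecPrim.of_base hνi.neg (right_mem_Icc.2 hab) fun t ht' => by
    rw [hν t ht', intervalIntegral.integral_symm t T, ← intervalIntegral.integral_neg]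
    simp only [Pi.neg_apply, neg_neg]
  have hη0 : ν T - (Sg T).mulVec (μ T) = 0 := by rw [hSg.2.2.1, hνT, sub_self]
  have hηp : VecPrim t0 T (fun τ => ν τ - (Sg τ).mulVec (μ τ))
      (fun τ => -(((F τ)ᵀ - Sg τ * gqg G Q τ).mulVec (ν τ - (Sg τ).mulVec (μ τ)) +
        (Sg τ).mulVec (lμ τ) - lν τ)) := by
    intro i
    refine ((hνp i).sub (hSp.mulVec hab hμp i)).congr hab (fun _ _ => rfl) fun τ _ => ?_
    rw [← Pi.sub_apply]
    refine congrFun (a := i) ?_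
    simp only [Pi.neg_apply, Matrix.sub_mulVec, Matrix.add_mulVec, Matrix.neg_mulVec,
      Matrix.mulVec_sub, Matrix.mulVec_add, ← Matrix.mulVec_mulVec]
    abel
  refine ⟨hη0, by simpa only [Pi.neg_def, neg_neg] using hηp.intervalIntegrable.neg, fun t ht' => ?_, fun t ht' => ?_⟩
  · have h := hηp.sub_eq_integral ht' (right_mem_Icc.2 hab)
    rw [hη0, zero_sub, intervalIntegral.integral_neg] at h
    exact neg_injective h
  · have hΦp := hPhiFS.matPrim ht'
    have hΦt : MatPrim t0 T (fun τ => (PhiFS τ t)ᵀ)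
      (fun τ => ((F τ - gqg G Q τ * Sg τ) * PhiFS τ t)ᵀ) := fun i j => hΦp j i
    have hP : VecPrim t0 T (fun τ => (PhiFS τ t)ᵀ.mulVec (ν τ - (Sg τ).mulVec (μ τ)))
        (fun τ => -(PhiFS τ t)ᵀ.mulVec ((Sg τ).mulVec (lμ τ) - lν τ)) := by
      intro i
      refine (hΦt.mulVec hab hηp i).congr hab (fun _ _ => rfl) fun τ hτ => ?_
      refine congrFun (a := i) ?_
      -- Symmetry of `V` and `Σ` turns `(F - V Σ)*` into `F* - Σ V`, so the terms in `η` cancel.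
      have hV := gqg_transpose (G := G) (hQpsd τ hτ)
      have hS := riccati_symm hab hQpsd hRbd hST hSg hPhiFS hτ
      simp only [Matrix.transpose_mul, Matrix.transpose_sub, hV, hS, ← Matrix.mulVec_mulVec,
        Matrix.mulVec_neg, add_sub_assoc, Matrix.mulVec_add]
      abel
    have h := hP.sub_eq_integral ht' (right_mem_Icc.2 hab)
    rw [hη0, hPhiFS.self ht', intervalIntegral.integral_neg] at h
    simpa only [Matrix.mulVec_zero, Matrix.transpose_one, Matrix.one_mulVec, zero_sub,
      neg_inj] using h

end SDEKernels
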